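/- The polar dual P° = {m ∈ ℝ² : ⟨m, v⟩ ≥ -1 for all v ∈ P} of the polygon P has Lebesgue area 11/15; equivalently, its normalized volume (twice the Lebesgue area) equals 22/15. -/

import Mathlib

open MeasureTheory

lemma polar_eq : {m : ℝ × ℝ | ∀ v ∈ convexHull ℝ
        ({((2:ℝ), (1:ℝ)), (1, 2), (-1, 2), (-2, -1), (-1, -2), (1, -2)} : Set (ℝ × ℝ)),
        m.1 * v.1 + m.2 * v.2 ≥ -1} =
    {m : ℝ × ℝ | -(min ((1 + m.2)/2) (1 - 2*|m.2|)) ≤ m.1 ∧ m.1 ≤ min ((1 - m.2)/2) (1 - 2*|m.2|)} := by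
  ext ⟨x, y⟩
  simp only [Set.mem_ofPred_eq]
  constructor
  · intro h
    have h1 := h (2,1) (subset_convexHull ℝ _ (by simp))
    have h2 := h (1,2) (subset_convexHull ℝ _ (by simp))
    have h3 := h (-1,2) (subset_convexHull ℝ _ (by simp))
    have h4 := h (-2,-1) (subset_convexHull ℝ _ (by simp))
    have h5 := h (-1,-2) (subset_convexHull ℝ _ (by simp))
    have h6 := h (1,-2) (subset_convexHull ℝ _ (by simp))
    simp only at h1 h2 h3 h4 h5 h6
    constructor
    · rw [neg_le]
      refine le_min (by linarith) ?_
      rcases abs_cases y with ⟨e, _⟩ | ⟨e, _⟩ <;> rw [e] <;> linarith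
    · refine le_min (by linarith) ?_
      rcases abs_cases y with ⟨e, _⟩ | ⟨e, _⟩ <;> rw [e] <;> linarith
  · rintro ⟨ha, hb⟩ v hv
    rw [neg_le, le_min_iff] at ha
    rw [le_min_iff] at hb
    obtain ⟨a1, a2⟩ := ha
    obtain ⟨b1, b2⟩ := hb
    have := le_abs_self y
    have := neg_abs_le y
    have hc : Convex ℝ {v : ℝ × ℝ | x * v.1 + y * v.2 ≥ -1} := by
      intro p hp q hq s t hs ht hst
      simp only [Set.mem_ofPred_eq, Prod.fst_add, Prod.snd_add, Prod.smul_fst, Prod.smul_snd,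
        smul_eq_mul] at *
      nlinarith [mul_le_mul_of_nonneg_left hp hs, mul_le_mul_of_nonneg_left hq ht]
    refine convexHull_min ?_ hc hv
    intro w hw
    simp only [Set.mem_insert_iff, Set.mem_singleton_iff] at hw
    rcases hw with rfl | rfl | rfl | rfl | rfl | rfl <;> simp only [Set.mem_ofPred_eq] <;> linarith

lemma int_b : ∫ y in (-1/2:ℝ)..(1/2), min ((1 - y)/2) (1 - 2*|y|) = 11/30 := by
  have hc : Continuous fun y : ℝ => min ((1 - y)/2) (1 - 2*|y|) := by fun_prop
  have hi := fun a b : ℝ => hc.intervalIntegrable (μ := volume) a b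
  rw [← intervalIntegral.integral_add_adjacent_intervals (hi (-1/2) (-1/5)) (hi (-1/5) (1/2)),
    ← intervalIntegral.integral_add_adjacent_intervals (hi (-1/5) (1/3)) (hi (1/3) (1/2))]
  have e1 : ∫ y in (-1/2:ℝ)..(-1/5), min ((1 - y)/2) (1 - 2*|y|) = ∫ y in (-1/2:ℝ)..(-1/5), (1 + 2*y) := by
    apply intervalIntegral.integral_congr
    intro y hy
    rw [Set.uIcc_of_le (by norm_num)] at hy
    obtain ⟨h1, h2⟩ := hy
    simp only
    rw [abs_of_nonpos (by linarith), min_eq_right (by linarith)]; ring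
  have e2 : ∫ y in (-1/5:ℝ)..(1/3), min ((1 - y)/2) (1 - 2*|y|) = ∫ y in (-1/5:ℝ)..(1/3), (1/2 - (1/2) * y) := by
    apply intervalIntegral.integral_congr
    intro y hy
    rw [Set.uIcc_of_le (by norm_num)] at hy
    obtain ⟨h1, h2⟩ := hy
    simp only
    rw [min_eq_left]
    · ring
    · rcases abs_cases y with ⟨e, _⟩ | ⟨e, _⟩ <;> rw [e] <;> linarith
  have e3 : ∫ y in (1/3:ℝ)..(1/2), min ((1 - y)/2) (1 - 2*|y|) = ∫ y in (1/3:ℝ)..(1/2), (1 - 2*y) := by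
    apply intervalIntegral.integral_congr
    intro y hy
    rw [Set.uIcc_of_le (by norm_num)] at hy
    obtain ⟨h1, h2⟩ := hy
    simp only
    rw [abs_of_nonneg (by linarith), min_eq_right (by linarith)]
  rw [e1, e2, e3, intervalIntegral.integral_add (by simp) (Continuous.intervalIntegrable (by fun_prop) _ _),
    intervalIntegral.integral_sub (by simp) (Continuous.intervalIntegrable (by fun_prop) _ _),
    intervalIntegral.integral_sub (by simp) (Continuous.intervalIntegrable (by fun_prop) _ _)]
  have hk : ∀ a b c : ℝ, ∫ y in a..b, c * y = c * ((b^2 - a^2)/2) := by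
    intro a b c
    rw [← integral_id]
    exact intervalIntegral.integral_const_mul c (fun y : ℝ => y)
  rw [hk, hk, hk]
  simp only [intervalIntegral.integral_const, smul_eq_mul]
  norm_num

lemma int_a : ∫ y in (-1/2:ℝ)..(1/2), min ((1 + y)/2) (1 - 2*|y|) = 11/30 := by
  have := intervalIntegral.integral_comp_neg (a := -1/2) (b := 1/2)
    (fun y : ℝ => min ((1 - y)/2) (1 - 2*|y|))
  simp only [abs_neg, sub_neg_eq_add] at this
  rw [this, ← int_b]
  norm_num

/-- The polar dual `P° = {m : ⟨m,v⟩ ≥ -1 for all v ∈ P}` of the polygon `P`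
(the convex hull of (2,1), (1,2), (-1,2), (-2,-1), (-1,-2), (1,-2)) has Lebesgue
area 11/15, i.e. its normalised volume is 22/15. -/
theorem volume_polar_dual_P :
    volume {m : ℝ × ℝ | ∀ v ∈ convexHull ℝ
        ({((2:ℝ), (1:ℝ)), (1, 2), (-1, 2), (-2, -1), (-1, -2), (1, -2)} : Set (ℝ × ℝ)),
        m.1 * v.1 + m.2 * v.2 ≥ -1} = ENNReal.ofReal (11 / 15) := by
  rw [polar_eq]
  have hm : MeasurableSet {m : ℝ × ℝ | -(min ((1 + m.2)/2) (1 - 2*|m.2|)) ≤ m.1 ∧ m.1 ≤ min ((1 - m.2)/2) (1 - 2*|m.2|)} :=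
    by
    have h1 : MeasurableSet {m : ℝ × ℝ | -(min ((1 + m.2)/2) (1 - 2*|m.2|)) ≤ m.1} :=
      (isClosed_le (by fun_prop) (by fun_prop)).measurableSet
    have h2 : MeasurableSet {m : ℝ × ℝ | m.1 ≤ min ((1 - m.2)/2) (1 - 2*|m.2|)} :=
      (isClosed_le (by fun_prop) (by fun_prop)).measurableSet
    exact h1.inter h2
  rw [Measure.volume_eq_prod, Measure.prod_apply_symm hm]
  have hs : ∀ y : ℝ, volume ((fun x : ℝ => (x, y)) ⁻¹' {m : ℝ × ℝ | -(min ((1 + m.2)/2) (1 - 2*|m.2|)) ≤ m.1 ∧ m.1 ≤ min ((1 - m.2)/2) (1 - 2*|m.2|)}) =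
      (Set.Ioc (-1/2:ℝ) (1/2)).indicator (fun y => ENNReal.ofReal (min ((1 - y)/2) (1 - 2*|y|) + min ((1 + y)/2) (1 - 2*|y|))) y := by
    intro y
    have : ((fun x : ℝ => (x, y)) ⁻¹' {m : ℝ × ℝ | -(min ((1 + m.2)/2) (1 - 2*|m.2|)) ≤ m.1 ∧ m.1 ≤ min ((1 - m.2)/2) (1 - 2*|m.2|)}) = Set.Icc (-(min ((1 + y)/2) (1 - 2*|y|))) (min ((1 - y)/2) (1 - 2*|y|)) := rfl
    rw [this, Real.volume_Icc, sub_neg_eq_add]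
    by_cases hy : y ∈ Set.Ioc (-1/2:ℝ) (1/2)
    · rw [Set.indicator_of_mem hy]
    · rw [Set.indicator_of_notMem hy, ENNReal.ofReal_eq_zero]
      have h1 := min_le_right ((1 - y)/2) (1 - 2*|y|)
      have h2 := min_le_right ((1 + y)/2) (1 - 2*|y|)
      have h3 : 1/2 ≤ |y| := by
        by_contra h
        rw [not_le, abs_lt] at h
        exact hy ⟨by linarith, by linarith⟩
      linarith
  have hca : Continuous fun y : ℝ => min ((1 + y)/2) (1 - 2*|y|) := by fun_prop
  have hcb : Continuous fun y : ℝ => min ((1 - y)/2) (1 - 2*|y|) := by fun_prop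
  rw [lintegral_congr hs, lintegral_indicator measurableSet_Ioc,
    ← ofReal_integral_eq_lintegral_ofReal]
  · rw [← intervalIntegral.integral_of_le (by norm_num),
      intervalIntegral.integral_add (hcb.intervalIntegrable _ _) (hca.intervalIntegrable _ _),
      int_a, int_b]
    norm_num
  · exact ((hcb.add hca).intervalIntegrable (-1/2) (1/2)).1
  · refine (ae_restrict_iff' measurableSet_Ioc).2 (Filter.Eventually.of_forall ?_)
    rintro y ⟨h1, h2⟩
    have h3 : |y| ≤ 1/2 := abs_le.2 ⟨by linarith, h2⟩
    exact add_nonneg (le_min (by linarith) (by linarith)) (le_min (by linarith) (by linarith))
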